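/- The semi-teleparallel connection form constructed from a connection form ω by ωˢ(u)x := ω(u)x − η(Dωv(u), x)·v + η(v,x)·Σᵢ η(bᵢ,u)·Dωv(bᵢ) − η(v,u)·Σᵢ η(Dωbᵢ(v), x)·bᵢ is invariant under rotations of the triad that are constant along the preferred direction: if Λ is a real 3×3 matrix with Σₖ Λₖᵢ Λₖⱼ = δᵢⱼ, and the rotated triad b′ᵢ := Σⱼ Λⱼᵢ bⱼ is given derivative data db′ᵢ with db′ᵢ(v) = Σⱼ Λⱼᵢ dbⱼ(v), then the map ωˢ built from {v, b′ᵢ, db′ᵢ} equals the map ωˢ built from {v, bᵢ, dbᵢ}. -/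

import Mathlib

open Finset

/- Minkowski space V = ℝ⁴ with bilinear form η. -/
abbrev V4 := Fin 4 → ℝ

def eta (x y : V4) : ℝ := -(x 0 * y 0) + x 1 * y 1 + x 2 * y 2 + x 3 * y 3

/-- `f : V → V` is linear. -/
def IsLin (f : V4 → V4) : Prop :=
  (∀ x y, f (x + y) = f x + f y) ∧ ∀ (c : ℝ) (x : V4), f (c • x) = c • f x

/-- `f` is η-skew: η(f x, y) = −η(x, f y). -/
def IsSkew (f : V4 → V4) : Prop := ∀ x y, eta (f x) y = - eta x (f y)

/-- A connection form: a linear map `ω : V → End V` with each `ω u` η-skew. -/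
def ConnForm (ω : V4 → V4 → V4) : Prop :=
  (∀ u u', ω (u + u') = ω u + ω u') ∧ (∀ (c : ℝ) (u : V4), ω (c • u) = c • ω u) ∧
  (∀ u, IsLin (ω u)) ∧ (∀ u, IsSkew (ω u))

/-- The semi-teleparallel connection constructed from a Lorentz connection `ω` and
frame data `{v, dv, bᵢ, dbᵢ}`:
`ωˢ(u)x = ω(u)x − η(Dωv(u),x)·v + η(v,x)·Σᵢ η(bᵢ,u)·Dωv(bᵢ) − η(v,u)·Σᵢ η(Dωbᵢ(v),x)·bᵢ`. -/
def omegaS (v : V4) (dv : V4 → V4) (b : Fin 3 → V4) (db : Fin 3 → V4 → V4)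
    (ω : V4 → V4 → V4) (u x : V4) : V4 :=
  ω u x - eta (dv u + ω u v) x • v
    + eta v x • ∑ i : Fin 3, eta (b i) u • (dv (b i) + ω (b i) v)
    - eta v u • ∑ i : Fin 3, eta (db i v + ω v (b i)) x • b i

/-!
Both triad sums in `ωˢ` have the form `Σᵢ T(pᵢ, qᵢ)` with `T` bilinear and `p`, `q` two families
that rotate by the same `Λ` as the triad, and such a contraction is unchanged because `Λ Λᵀ = 1`.
In the second sum the family `Dωbᵢ(v)` rotates like `bᵢ` because `Λ` is constant along `v`, so that
no derivative of `Λ` appears.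
-/

open scoped Matrix

section Rotation

variable {R M N P ι κ : Type*} [CommRing R] [AddCommGroup M] [Module R M]
  [AddCommGroup N] [Module R N] [AddCommGroup P] [Module R P] [Fintype ι]

/-- The family `i ↦ Σⱼ Λⱼᵢ bⱼ`: the frame `b` rotated by `Λ`, which acts on it from the right. -/
def rotateFrame (Λ : Matrix ι κ R) (b : ι → M) (i : κ) : M :=
  ∑ j, Λ j i • b j

theorem map_rotateFrame (f : M →ₗ[R] N) (Λ : Matrix ι κ R) (b : ι → M) (i : κ) :
    f (rotateFrame Λ b i) = rotateFrame Λ (fun j => f (b j)) i := by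
  simp only [rotateFrame, map_sum, map_smul]

theorem rotateFrame_add (Λ : Matrix ι κ R) (b c : ι → M) (i : κ) :
    rotateFrame Λ (fun j => b j + c j) i = rotateFrame Λ b i + rotateFrame Λ c i := by
  simp only [rotateFrame, smul_add, Finset.sum_add_distrib]

theorem sum_bilin_rotateFrame [Fintype κ] [DecidableEq ι] {Λ : Matrix ι κ R} (hΛ : Λ * Λᵀ = 1)
    (T : M →ₗ[R] N →ₗ[R] P) (p : ι → M) (q : ι → N) :
    ∑ i, T (rotateFrame Λ p i) (rotateFrame Λ q i) = ∑ j, T (p j) (q j) :=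
  calc ∑ i, T (rotateFrame Λ p i) (rotateFrame Λ q i)
      = ∑ i, ∑ k, ∑ j, (Λ k i * Λ j i) • T (p j) (q k) := by
        simp only [rotateFrame, map_sum, map_smul, LinearMap.sum_apply, LinearMap.smul_apply,
          Finset.smul_sum, smul_smul]
    _ = ∑ k, ∑ j, (Λ * Λᵀ) k j • T (p j) (q k) := by
        rw [Finset.sum_comm]
        refine Finset.sum_congr rfl fun k _ => ?_
        rw [Finset.sum_comm]
        simp only [Matrix.mul_apply, Matrix.transpose_apply, Finset.sum_smul]
    _ = ∑ j, T (p j) (q j) := by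
        simp only [hΛ, Matrix.one_apply, ite_smul, one_smul, zero_smul, Finset.sum_ite_eq,
          Finset.mem_univ, if_true]

end Rotation

section SemiTeleparallel

variable {R M ι : Type*} [CommRing R] [AddCommGroup M] [Module R M] [Fintype ι]

/-- The covariant derivative `Dωx(u) = dx(u) + ω(u)x` of a vector `x` with derivative data `dx`. -/
def covariantDeriv (ω : M →ₗ[R] Module.End R M) (x : M) (dx : M → M) (u : M) : M :=
  dx u + ω u x

/-- The semi-teleparallel connection `ωˢ` for an arbitrary bilinear form `B` in place of the
Minkowski form and an arbitrary finite frame `b` in place of the triad. -/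
def semiTeleparallel (B : LinearMap.BilinForm R M) (v : M) (dv : M → M) (b : ι → M)
    (db : ι → M → M) (ω : M →ₗ[R] Module.End R M) (u x : M) : M :=
  ω u x - B (covariantDeriv ω v dv u) x • v
    + B v x • ∑ i, B (b i) u • covariantDeriv ω v dv (b i)
    - B v u • ∑ i, B (covariantDeriv ω (b i) (db i) v) x • b i

theorem covariantDeriv_rotateFrame {κ : Type*} (ω : M →ₗ[R] Module.End R M) (Λ : Matrix ι κ R)
    (b : ι → M) {db : ι → M → M} {db' : κ → M → M} {v : M} {i : κ}
    (hdb' : db' i v = rotateFrame Λ (fun j => db j v) i) :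
    covariantDeriv ω (rotateFrame Λ b i) (db' i) v =
      rotateFrame Λ (fun j => covariantDeriv ω (b j) (db j) v) i := by
  simp only [covariantDeriv, rotateFrame_add, hdb', map_rotateFrame]

theorem statement6_general [DecidableEq ι] (B : LinearMap.BilinForm R M) (v : M)
    (dv : Module.End R M) (b : ι → M) (db : ι → M → M) (ω : M →ₗ[R] Module.End R M)
    {Λ : Matrix ι ι R} (hΛ : Λᵀ * Λ = 1) (db' : ι → M → M)
    (hdb' : ∀ i, db' i v = rotateFrame Λ (fun j => db j v) i) (u x : M) :
    semiTeleparallel B v dv (rotateFrame Λ b) db' ω u x = semiTeleparallel B v dv b db ω u x := by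
  have hΛ' : Λ * Λᵀ = 1 := mul_eq_one_comm.mp hΛ
  have sum_Dv : ∑ i, B (rotateFrame Λ b i) u • covariantDeriv ω v dv (rotateFrame Λ b i) =
      ∑ i, B (b i) u • covariantDeriv ω v dv (b i) :=
    sum_bilin_rotateFrame hΛ'
      ((LinearMap.lsmul R M).compl₁₂ (B.flip u) (dv + ω.flip v)) b b
  have sum_Db : ∑ i, B (covariantDeriv ω (rotateFrame Λ b i) (db' i) v) x • rotateFrame Λ b i =
      ∑ i, B (covariantDeriv ω (b i) (db i) v) x • b i := by
    simp only [covariantDeriv_rotateFrame ω Λ b (hdb' _)]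
    exact sum_bilin_rotateFrame hΛ' (LinearMap.lsmul R M ∘ₗ B.flip x) _ b
  rw [semiTeleparallel, sum_Dv, sum_Db, semiTeleparallel]

end SemiTeleparallel

/-- The Minkowski form `eta` as a bundled bilinear form. -/
def etaBilin : LinearMap.BilinForm ℝ V4 :=
  LinearMap.mk₂ ℝ eta
    (fun x y z => by simp only [eta, Pi.add_apply]; ring)
    (fun c x y => by simp only [eta, Pi.smul_apply, smul_eq_mul]; ring)
    (fun x y z => by simp only [eta, Pi.add_apply]; ring)
    (fun c x y => by simp only [eta, Pi.smul_apply, smul_eq_mul]; ring)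

/-- A map satisfying `IsLin` as a bundled endomorphism. -/
def IsLin.toEnd {f : V4 → V4} (hf : IsLin f) : Module.End ℝ V4 where
  toFun := f
  map_add' := hf.1
  map_smul' := hf.2

/-- A connection form as a bundled linear map into the endomorphisms. -/
def ConnForm.toLinearMap {ω : V4 → V4 → V4} (hω : ConnForm ω) : V4 →ₗ[ℝ] Module.End ℝ V4 where
  toFun u := (hω.2.2.1 u).toEnd
  map_add' u u' := LinearMap.ext (congrFun (hω.1 u u'))
  map_smul' c u := LinearMap.ext (congrFun (hω.2.1 c u))

/-- The semi-teleparallel connection form `ωˢ` is invariant under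
rotations of the triad that are constant along the preferred direction: if `Λ` is an
orthogonal 3×3 matrix (`Σₖ Λₖᵢ Λₖⱼ = δᵢⱼ`) and the rotated triad `b′ᵢ = Σⱼ Λⱼᵢ bⱼ`
carries derivative data `db′ᵢ` with `db′ᵢ(v) = Σⱼ Λⱼᵢ dbⱼ(v)`, then `ωˢ` built from
`{v, b′, db′}` equals `ωˢ` built from `{v, b, db}`. -/
theorem statement6 (v : V4) (hv : eta v v = -1)
    (dv : V4 → V4) (hdvlin : IsLin dv) (hdvorth : ∀ u, eta v (dv u) = 0)
    (b : Fin 3 → V4) (hb : ∀ i j, eta (b i) (b j) = if i = j then 1 else 0)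
    (hvb : ∀ i, eta v (b i) = 0)
    (db : Fin 3 → V4 → V4)
    (ω : V4 → V4 → V4) (hω : ConnForm ω)
    (Λ : Fin 3 → Fin 3 → ℝ)
    (hΛ : ∀ i j, (∑ k : Fin 3, Λ k i * Λ k j) = if i = j then 1 else 0)
    (db' : Fin 3 → V4 → V4)
    (hdb' : ∀ i, db' i v = ∑ j : Fin 3, Λ j i • db j v) :
    ∀ u x, omegaS v dv (fun i => ∑ j : Fin 3, Λ j i • b j) db' ω u x
      = omegaS v dv b db ω u x :=
  statement6_general etaBilin v hdvlin.toEnd b db hω.toLinearMap (Matrix.ext hΛ) db' hdb'
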